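/- arXiv:1111.5366 — 2 statements merged into one kernel-verified Lean document; each statement's English description precedes it below -/
import Mathlib

section
/- For generic α, β ∈ ℂ, the quantities V_α, W_β, S_{β,α} satisfy W_β·Ṽ_α = 1 − χ_{β,−δ}(ξ+δ)·S̃_{β,α} − χ_{α,δ}(ξ)·S_{β,α}, where tilde denotes evaluation at (n+1,m,h); the analogous relations hold with (tilde, δ) replaced by (hat, ε) and by (bar, λ). -/
open scoped BigOperators

noncomputable section

/-- A period lattice in `ℂ` spanned by two `ℝ`-independent periods. -/
structure EllLattice where
  ω₁ : ℂ
  ω₂ : ℂ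
  indep : ∀ a b : ℝ, a • ω₁ + b • ω₂ = 0 → a = 0 ∧ b = 0

namespace EllLattice

/-- Membership in the lattice `Λ = ℤω₁ + ℤω₂`. -/
def mem (L : EllLattice) (z : ℂ) : Prop := ∃ m n : ℤ, z = m • L.ω₁ + n • L.ω₂

/-- The lattice point with integer coordinates `p = (m, n)`. -/
def per (L : EllLattice) (p : ℤ × ℤ) : ℂ := p.1 • L.ω₁ + p.2 • L.ω₂

/-- The Weierstrass sigma function associated to the lattice, defined by its
Hadamard product over the nonzero lattice points. -/
def sigma (L : EllLattice) (z : ℂ) : ℂ :=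
  z * ∏' p : {p : ℤ × ℤ // p ≠ 0},
      ((1 - z / L.per p.1) *
        Complex.exp (z / L.per p.1 + z ^ 2 / (2 * (L.per p.1) ^ 2)))

/-- The Weierstrass zeta function `ζ = σ′/σ`. -/
def zeta (L : EllLattice) (z : ℂ) : ℂ := deriv L.sigma z / L.sigma z

/-- The Weierstrass `℘`-function `℘ = −ζ′`. -/
def wp (L : EllLattice) (z : ℂ) : ℂ := - deriv L.zeta z

/-- `Φ_ξ(κ) = σ(ξ+κ)/(σ(ξ)σ(κ))`. -/
def Phi (L : EllLattice) (ξ κ : ℂ) : ℂ := L.sigma (ξ + κ) / (L.sigma ξ * L.sigma κ)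

/-- The Lamé function `Ψ_ξ(κ) = Φ_ξ(κ)·e^{−ζ(ξ)κ}`. -/
def Psi (L : EllLattice) (ξ κ : ℂ) : ℂ := L.Phi ξ κ * Complex.exp (-(L.zeta ξ) * κ)

/-- `η_δ(ξ) = ζ(ξ+δ) − ζ(ξ) − ζ(δ)`. -/
def eta (L : EllLattice) (δ ξ : ℂ) : ℂ := L.zeta (ξ + δ) - L.zeta ξ - L.zeta δ

/-- `χ_{α,β}(ξ) = ζ(α) + ζ(β) + ζ(ξ) − ζ(ξ+α+β)`. -/
def chi (L : EllLattice) (α β ξ : ℂ) : ℂ :=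
  L.zeta α + L.zeta β + L.zeta ξ - L.zeta (ξ + α + β)

end EllLattice

open Matrix

/-- All the data entering the elliptic (N,N′)-soliton solutions of the lattice KP system:
a period lattice, lattice parameters `δ, ε, λ`, a base point `ξ₀`, rapidity parameters
`κ_i, κ′_j`, initial plane-wave constants `ρ⁰_i, ν⁰_j` and a constant `N′×N` matrix `C`. -/
structure KPData (N N' : ℕ) where
  L : EllLattice
  del : ℂ
  eps : ℂ
  lam : ℂ
  xi0 : ℂ
  κ : Fin N → ℂ
  κ' : Fin N' → ℂ
  ρ0 : Fin N → ℂ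
  ν0 : Fin N' → ℂ
  C : Matrix (Fin N') (Fin N) ℂ

namespace KPData

variable {N N' : ℕ}

/-- `ξ = ξ₀ + nδ + mε + hλ`. -/
def xi (D : KPData N N') (n m h : ℤ) : ℂ :=
  D.xi0 + n • D.del + m • D.eps + h • D.lam

/-- The plane-wave factor `ρ_i(n,m,h)`. -/
def ρ (D : KPData N N') (i : Fin N) (n m h : ℤ) : ℂ :=
  (Complex.exp (-(D.L.zeta D.del) * D.κ i) * D.L.Psi D.del (-(D.κ i))) ^ n *
  (Complex.exp (-(D.L.zeta D.eps) * D.κ i) * D.L.Psi D.eps (-(D.κ i))) ^ m *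
  (Complex.exp (-(D.L.zeta D.lam) * D.κ i) * D.L.Psi D.lam (-(D.κ i))) ^ h *
  Complex.exp (D.L.zeta (D.xi n m h) * D.κ i) * D.ρ0 i

/-- The plane-wave factor `ν_j(n,m,h)`. -/
def ν (D : KPData N N') (j : Fin N') (n m h : ℤ) : ℂ :=
  (Complex.exp (D.L.zeta D.del * D.κ' j) * D.L.Psi D.del (D.κ' j)) ^ (-n) *
  (Complex.exp (D.L.zeta D.eps * D.κ' j) * D.L.Psi D.eps (D.κ' j)) ^ (-m) *
  (Complex.exp (D.L.zeta D.lam * D.κ' j) * D.L.Psi D.lam (D.κ' j)) ^ (-h) *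
  Complex.exp (D.L.zeta (D.xi n m h) * D.κ' j) * D.ν0 j

/-- The dressed elliptic Cauchy matrix `M_{ij} = ρ_i Ψ_ξ(κ_i + κ′_j) ν_j`. -/
def M (D : KPData N N') (n m h : ℤ) : Matrix (Fin N) (Fin N') ℂ :=
  Matrix.of fun i j => D.ρ i n m h * D.L.Psi (D.xi n m h) (D.κ i + D.κ' j) * D.ν j n m h

/-- The column vector `r = (ρ_i Ψ_ξ(κ_i))_i`. -/
def r (D : KPData N N') (n m h : ℤ) : Fin N → ℂ :=
  fun i => D.ρ i n m h * D.L.Psi (D.xi n m h) (D.κ i)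

/-- The column vector `s = (ν_j Ψ_ξ(κ′_j))_j`. -/
def s (D : KPData N N') (n m h : ℤ) : Fin N' → ℂ :=
  fun j => D.ν j n m h * D.L.Psi (D.xi n m h) (D.κ' j)

/-- The τ-function `τ = det(1 + MC)`. -/
def τ (D : KPData N N') (n m h : ℤ) : ℂ := (1 + D.M n m h * D.C).det

/-- The diagonal matrix `χ_{α,K}(ξ) = diag(χ_{α,κ_i}(ξ))`. -/
def DK (D : KPData N N') (α : ℂ) (n m h : ℤ) : Matrix (Fin N) (Fin N) ℂ :=
  Matrix.diagonal fun i => D.L.chi α (D.κ i) (D.xi n m h)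

/-- The diagonal matrix `χ_{β,K′}(ξ) = diag(χ_{β,κ′_j}(ξ))`. -/
def DK' (D : KPData N N') (β : ℂ) (n m h : ℤ) : Matrix (Fin N') (Fin N') ℂ :=
  Matrix.diagonal fun j => D.L.chi β (D.κ' j) (D.xi n m h)

/-- `W_β = 1 − sᵀ (χ_{β,K′}(ξ))⁻¹ C (1+MC)⁻¹ r`. -/
def W (D : KPData N N') (β : ℂ) (n m h : ℤ) : ℂ :=
  1 - D.s n m h ⬝ᵥ ((D.DK' β n m h)⁻¹ *ᵥ (D.C *ᵥ ((1 + D.M n m h * D.C)⁻¹ *ᵥ D.r n m h)))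

/-- `V_α = 1 − sᵀ (1+CM)⁻¹ C (χ_{α,K}(ξ))⁻¹ r`. -/
def V (D : KPData N N') (α : ℂ) (n m h : ℤ) : ℂ :=
  1 - D.s n m h ⬝ᵥ ((1 + D.C * D.M n m h)⁻¹ *ᵥ (D.C *ᵥ ((D.DK α n m h)⁻¹ *ᵥ D.r n m h)))

/-- `w₀ = sᵀ C (1+MC)⁻¹ r`. -/
def w0 (D : KPData N N') (n m h : ℤ) : ℂ :=
  D.s n m h ⬝ᵥ (D.C *ᵥ ((1 + D.M n m h * D.C)⁻¹ *ᵥ D.r n m h))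

/-- `w = ζ(ξ) − w₀ − nζ(δ) − mζ(ε) − hζ(λ)`. -/
def w (D : KPData N N') (n m h : ℤ) : ℂ :=
  D.L.zeta (D.xi n m h) - D.w0 n m h - n • D.L.zeta D.del - m • D.L.zeta D.eps -
    h • D.L.zeta D.lam

/-- `S_{β,α} = sᵀ (χ_{β,K′}(ξ))⁻¹ C (1+MC)⁻¹ (χ_{α,K}(ξ))⁻¹ r`. -/
def S (D : KPData N N') (β α : ℂ) (n m h : ℤ) : ℂ :=
  D.s n m h ⬝ᵥ ((D.DK' β n m h)⁻¹ *ᵥ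
    (D.C *ᵥ ((1 + D.M n m h * D.C)⁻¹ *ᵥ ((D.DK α n m h)⁻¹ *ᵥ D.r n m h))))

/-- `u_α = (1+MC)⁻¹ (χ_{α,K}(ξ))⁻¹ r`. -/
def u (D : KPData N N') (α : ℂ) (n m h : ℤ) : Fin N → ℂ :=
  (1 + D.M n m h * D.C)⁻¹ *ᵥ ((D.DK α n m h)⁻¹ *ᵥ D.r n m h)

/-- `u₀ = (1+MC)⁻¹ r`. -/
def u0 (D : KPData N N') (n m h : ℤ) : Fin N → ℂ :=
  (1 + D.M n m h * D.C)⁻¹ *ᵥ D.r n m h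

/-- the adjoint (row) vector `ᵗu_β = sᵀ (χ_{β,K′}(ξ))⁻¹ (1+CM)⁻¹`. -/
def tu (D : KPData N N') (β : ℂ) (n m h : ℤ) : Fin N' → ℂ :=
  (D.s n m h ᵥ* (D.DK' β n m h)⁻¹) ᵥ* (1 + D.C * D.M n m h)⁻¹

/-- the adjoint (row) vector `ᵗu₀ = sᵀ (1+CM)⁻¹`. -/
def tu0 (D : KPData N N') (n m h : ℤ) : Fin N' → ℂ :=
  D.s n m h ᵥ* (1 + D.C * D.M n m h)⁻¹

/-- The gauge variable `𝒱_α = Φ_ξ(α)·V_α`. -/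
def calV (D : KPData N N') (α : ℂ) (n m h : ℤ) : ℂ :=
  D.L.Phi (D.xi n m h) α * D.V α n m h

/-- The gauge variable `𝒲_β = Φ_ξ(β)·W_β`. -/
def calW (D : KPData N N') (β : ℂ) (n m h : ℤ) : ℂ :=
  D.L.Phi (D.xi n m h) β * D.W β n m h

/-- The Schwarzian variable `Z_{β,α} = Φ_ξ(α+β)·(1 − χ_{α,β}(ξ)·S_{β,α})`. -/
def Z (D : KPData N N') (β α : ℂ) (n m h : ℤ) : ℂ :=
  D.L.Phi (D.xi n m h) (α + β) * (1 - D.L.chi α β (D.xi n m h) * D.S β α n m h)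

/-- Genericity of the parameters (together with finitely many auxiliary points `extra`):
no nontrivial integer combination of `ξ₀, δ, ε, λ`, the rapidity parameters and the
auxiliary points lies on the lattice.  In particular all arguments of `σ` occurring in
the soliton solutions and their shifts lie outside `Λ`. -/
def Generic {P : ℕ} (D : KPData N N') (extra : Fin P → ℂ) : Prop :=
  ∀ (c0 cn cm ch : ℤ) (a : Fin N → ℤ) (b : Fin N' → ℤ) (e : Fin P → ℤ),
    ¬ (c0 = 0 ∧ cn = 0 ∧ cm = 0 ∧ ch = 0 ∧ a = 0 ∧ b = 0 ∧ e = 0) →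
    ¬ D.L.mem (c0 • D.xi0 + cn • D.del + cm • D.eps + ch • D.lam +
      (∑ i, a i • D.κ i) + (∑ j, b j • D.κ' j) + ∑ t, e t • extra t)

end KPData

/-!
Write the soliton quantities through the bilinear form `⟨u, v⟩ = uᵀC(1 + MC)⁻¹v`. The addition
formula
`Φ_δ(−κ) Φ_{ξ+δ}(κ + κ') = Φ_δ(κ') Φ_ξ(κ + κ') − Φ_ξ(κ) Φ_{ξ+δ}(κ')`
says that one lattice step changes `M` by a matrix of rank one, `M̃ = M − r s̃ᵀ`, so that
`⟨u, r⟩ ⟨s̃, v⟩~ = ⟨u, v⟩~ − ⟨u, v⟩` by the resolvent identity. Since `χ_{α,κ}(ξ)` equals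
`Φ_ξ(α) Φ_ξ(κ) / Φ_ξ(α + κ)`, the same formula with `κ' = α` expresses `r` and `s̃` through the
vectors `χ⁻¹r` and `χ⁻¹s` at the two ends of the step, and the product `(1 − ⟨u, r⟩)(1 − ⟨s̃, v⟩~)`
collapses to the claim. The addition formula is the three-term identity of `σ`, which follows from
quasi-periodicity: as a function of one variable, the three-term sum is an elliptic function times
a product of two `σ`s whose zeros it shares, and Liouville's theorem applies to the quotient.
-/

open Filter Topology

/-- The Weierstrass elementary factor of genus 2. The product defining `σ` is
`z * ∏ weierstrassFactor (z / l)` over the nonzero lattice points `l`. -/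
def weierstrassFactor (u : ℂ) : ℂ := (1 - u) * Complex.exp (u + u ^ 2 / 2)

@[simp] lemma weierstrassFactor_zero : weierstrassFactor 0 = 1 := by simp [weierstrassFactor]

lemma weierstrassFactor_ne_zero {u : ℂ} (hu : u ≠ 1) : weierstrassFactor u ≠ 0 :=
  mul_ne_zero (sub_ne_zero.mpr hu.symm) (Complex.exp_ne_zero _)

lemma hasDerivAt_weierstrassFactor (u : ℂ) :
    HasDerivAt weierstrassFactor (-u ^ 2 * Complex.exp (u + u ^ 2 / 2)) u := by
  have hexp : HasDerivAt (fun v : ℂ ↦ v + v ^ 2 / 2) (1 + u) u := by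
    simpa using (hasDerivAt_id u).fun_add ((hasDerivAt_pow 2 u).div_const 2)
  refine (((hasDerivAt_id u).const_sub 1).mul hexp.cexp).congr_deriv ?_
  simp only [id]
  ring

lemma differentiable_weierstrassFactor : Differentiable ℂ weierstrassFactor :=
  fun u ↦ (hasDerivAt_weierstrassFactor u).differentiableAt

lemma differentiable_weierstrassFactor_div (l : ℂ) :
    Differentiable ℂ fun z ↦ weierstrassFactor (z / l) :=
  differentiable_weierstrassFactor.comp (by fun_prop)

lemma norm_weierstrassFactor_sub_one_le {u : ℂ} (hu : ‖u‖ ≤ 1 / 2) :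
    ‖weierstrassFactor u - 1‖ ≤ 3 * ‖u‖ ^ 3 := by
  have hderiv : ∀ v ∈ Metric.closedBall (0 : ℂ) ‖u‖,
      ‖-v ^ 2 * Complex.exp (v + v ^ 2 / 2)‖ ≤ 3 * ‖u‖ ^ 2 := by
    intro v hv
    replace hv : ‖v‖ ≤ ‖u‖ := by simpa using hv
    have hexp : ‖Complex.exp (v + v ^ 2 / 2)‖ ≤ 3 := calc
      _ ≤ Real.exp (5 / 8) := (Complex.norm_exp_le_exp_norm _).trans <| Real.exp_le_exp.mpr <|
          (norm_add_le _ _).trans <| by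
            rw [norm_div, norm_pow, Complex.norm_ofNat]
            nlinarith [norm_nonneg v]
      _ ≤ 1 / (1 - 5 / 8) := Real.exp_bound_div_one_sub_of_interval (by norm_num) (by norm_num)
      _ ≤ 3 := by norm_num
    rw [norm_mul, norm_neg, norm_pow, mul_comm]
    gcongr
  have := (convex_closedBall (0 : ℂ) ‖u‖).norm_image_sub_le_of_norm_hasDerivWithin_le
    (fun v _ ↦ (hasDerivAt_weierstrassFactor v).hasDerivWithinAt) hderiv
    (Metric.mem_closedBall_self (norm_nonneg u)) (mem_closedBall_zero_iff.mpr le_rfl)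
  simpa [pow_succ, mul_assoc] using this

lemma logDeriv_weierstrassFactor {u : ℂ} (hu : u ≠ 1) :
    logDeriv weierstrassFactor u = 1 + u - 1 / (1 - u) := by
  have hu' : 1 - u ≠ 0 := sub_ne_zero.mpr hu.symm
  rw [logDeriv_apply, (hasDerivAt_weierstrassFactor u).deriv, weierstrassFactor,
    mul_div_mul_right _ _ (Complex.exp_ne_zero _)]
  field_simp
  ring

lemma hasDerivAt_logDeriv_weierstrassFactor_div {z l : ℂ} (hz : z / l ≠ 1) :
    HasDerivAt (logDeriv fun w ↦ weierstrassFactor (w / l))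
      ((1 - 1 / (1 - z / l) ^ 2) / l ^ 2) z := by
  have hcomp : (logDeriv fun w ↦ weierstrassFactor (w / l)) =ᶠ[𝓝 z]
      fun w ↦ (1 + w / l - 1 / (1 - w / l)) * (1 / l) := by
    have hcont : ContinuousAt (fun w : ℂ ↦ w / l) z := by fun_prop
    filter_upwards [hcont.eventually_ne hz] with w hw
    have := logDeriv_comp (f := weierstrassFactor) (g := fun w ↦ w / l) (x := w)
      (differentiable_weierstrassFactor _) (by fun_prop)
    rw [← logDeriv_weierstrassFactor hw]
    simpa [Function.comp_def, deriv_div_const] using this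
  refine HasDerivAt.congr_of_eventuallyEq ?_ hcomp
  have hdiv : HasDerivAt (fun w : ℂ ↦ w / l) (1 / l) z := (hasDerivAt_id z).div_const l
  have hinv : HasDerivAt (fun w : ℂ ↦ 1 / (1 - w / l)) (1 / l / (1 - z / l) ^ 2) z := by
    simpa using (hdiv.const_sub 1).fun_inv (sub_ne_zero.mpr hz.symm)
  refine (((hdiv.const_add 1).fun_sub hinv).mul_const (1 / l)).congr_deriv ?_
  ring

lemma tendsto_deriv_logDeriv {ι : Type*} {p : Filter ι} [p.NeBot] {F : ι → ℂ → ℂ} {f : ℂ → ℂ}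
    {U : Set ℂ} (hF : TendstoLocallyUniformlyOn F f p U)
    (hd : ∀ᶠ n in p, DifferentiableOn ℂ (F n) U) (hU : IsOpen U) (hf : ∀ z ∈ U, f z ≠ 0)
    (hF0 : ∀ᶠ n in p, ∀ z ∈ U, F n z ≠ 0) {z : ℂ} (hz : z ∈ U) :
    Tendsto (fun n ↦ deriv (logDeriv (F n)) z) p (𝓝 (deriv (logDeriv f) z)) := by
  have hfd := hF.differentiableOn hd hU
  have hlog : TendstoLocallyUniformlyOn (fun n ↦ logDeriv (F n)) (logDeriv f) p U :=
    (hF.deriv hd hU).div₀ hF (hfd.deriv hU).continuousOn hfd.continuousOn hf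
  refine (hlog.deriv ?_ hU).tendsto_at hz
  filter_upwards [hd, hF0] with n hn hn0
  exact (hn.deriv hU).div hn hn0

lemma exists_differentiable_mul_eq_of_simple_zeros {f d : ℂ → ℂ} (hf : Differentiable ℂ f)
    (hd : Differentiable ℂ d) (h : ∀ x, d x = 0 → f x = 0 ∧ deriv d x ≠ 0) :
    ∃ g : ℂ → ℂ, Differentiable ℂ g ∧ ∀ x, f x = d x * g x := by
  classical
  refine ⟨fun x ↦ if d x = 0 then deriv f x / deriv d x else f x / d x, fun x ↦ ?_, fun x ↦ ?_⟩
  · by_cases hx : d x = 0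
    · obtain ⟨hfx, hdx⟩ := h x hx
      have hdslope {g : ℂ → ℂ} (hg : Differentiable ℂ g) : DifferentiableAt ℂ (dslope g x) x :=
        ((Complex.differentiableOn_dslope univ_mem).mpr hg.differentiableOn).differentiableAt
          univ_mem
      have hdx' : dslope d x x ≠ 0 := by rwa [dslope_same]
      refine ((hdslope hf).div (hdslope hd) hdx').congr_of_eventuallyEq ?_
      filter_upwards [(hdslope hd).continuousAt.eventually_ne hdx'] with z hz
      rcases eq_or_ne z x with rfl | hzx
      · simp [hx]
      · have hzx' : z - x ≠ 0 := sub_ne_zero.mpr hzx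
        rw [dslope_of_ne _ hzx, slope_def_field, hx, sub_zero] at hz
        have hdz : d z ≠ 0 := fun hdz ↦ hz (by rw [hdz, zero_div])
        rw [if_neg hdz, Pi.div_apply, dslope_of_ne _ hzx, dslope_of_ne _ hzx, slope_def_field,
          slope_def_field, hx, hfx, sub_zero, sub_zero, div_div_div_cancel_right₀ hzx']
    · refine ((hf x).div (hd x) hx).congr_of_eventuallyEq ?_
      filter_upwards [(hd x).continuousAt.eventually_ne hx] with z hz
      simp [hz]
  · by_cases hx : d x = 0
    · simp [hx, (h x hx).1]
    · simp only [if_neg hx, mul_div_cancel₀ (f x) hx]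

lemma eq_zero_of_common_multiplier (Λ : Submodule ℤ ℂ) [DiscreteTopology Λ] [IsZLattice ℝ Λ]
    {f d : ℂ → ℂ} (hf : Differentiable ℂ f) (hd : Differentiable ℂ d)
    (hmul : ∀ l ∈ Λ, ∀ x, ∃ c : ℂ, c ≠ 0 ∧ f (x + l) = c * f x ∧ d (x + l) = c * d x)
    (hzero : ∀ x, d x = 0 → f x = 0 ∧ deriv d x ≠ 0) {z : ℂ} (hfz : f z = 0) (hdz : d z ≠ 0) :
    f = 0 := by
  obtain ⟨g, hg, hfg⟩ := exists_differentiable_mul_eq_of_simple_zeros hf hd hzero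
  have hdense : Dense {x | d x ≠ 0} := fun x ↦ by
    by_cases hx : d x = 0
    · exact mem_closure_iff_frequently.mpr <|
        (((hd x).hasDerivAt.eventually_ne (hzero x hx).2).frequently).filter_mono inf_le_left
    · exact subset_closure hx
  have hperiodic : ∀ x, ∀ l ∈ Λ, g (x + l) = g x := fun x l hl ↦ by
    refine congrFun (Continuous.ext_on hdense (f := fun x ↦ g (x + l)) (g := g)
      (hg.continuous.comp (continuous_add_const l)) hg.continuous fun x hx ↦ ?_) x
    obtain ⟨c, hc, hfc, hdc⟩ := hmul l hl x
    rw [hfg, hfg x, hdc] at hfc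
    exact mul_left_cancel₀ (mul_ne_zero hc hx) (by rw [hfc, mul_assoc])
  have hgz : g z = 0 := (mul_eq_zero.mp (hfg z ▸ hfz)).resolve_left hdz
  funext x
  rw [hfg, hg.apply_eq_apply_of_bounded
    (IsZLattice.isCompact_range_of_periodic Λ g hg.continuous hperiodic).isBounded x z, hgz,
    mul_zero, Pi.zero_apply]

namespace EllLattice

variable (L : EllLattice)

/-- The same lattice as a Mathlib `PeriodPair`, which gives access to the lattice as a discrete
subgroup of `ℂ` and to the function `℘`. -/
def toPeriodPair : PeriodPair where
  ω₁ := L.ω₁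
  ω₂ := L.ω₂
  indep := LinearIndependent.pair_iff.mpr L.indep

/-- The period lattice `Λ` as a subgroup of `ℂ`. -/
abbrev lattice : Submodule ℤ ℂ := L.toPeriodPair.lattice

variable {L} in
lemma mem_iff {z : ℂ} : L.mem z ↔ z ∈ L.lattice := by
  simp [mem, PeriodPair.mem_lattice, toPeriodPair, eq_comm]

lemma coe_latticeEquivProd_symm (p : ℤ × ℤ) :
    (L.toPeriodPair.latticeEquivProd.symm p : ℂ) = L.per p := by
  rw [PeriodPair.latticeEquiv_symm_apply]
  simp [per, toPeriodPair]

lemma countable_lattice : (L.lattice : Set ℂ).Countable :=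
  Set.countable_coe_iff.mp
    (L.toPeriodPair.latticeEquivProd.toEquiv.countable_iff.mpr inferInstance)

lemma isOpen_compl_lattice : IsOpen (L.lattice : Set ℂ)ᶜ :=
  L.toPeriodPair.isClosed_lattice.isOpen_compl

lemma dense_compl_lattice : Dense (L.lattice : Set ℂ)ᶜ :=
  L.countable_lattice.dense_compl ℝ

lemma isPreconnected_compl_lattice : IsPreconnected (L.lattice : Set ℂ)ᶜ :=
  (L.countable_lattice.isPathConnected_compl_of_one_lt_rank (by simp)).isConnected.isPreconnected

/-! ### Quasi-periodicity of the sigma function -/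

/-- The entire function `σ z / z`. The product runs over the whole lattice: since `z / 0 = 0`,
the factor at `l = 0` is `1`. -/
def sigmaDivId (z : ℂ) : ℂ := ∏' l : L.lattice, weierstrassFactor (z / l)

lemma eventually_norm_weierstrassFactor_div_sub_one_le (r : ℝ) :
    ∀ᶠ l : L.lattice in cofinite, ∀ z ∈ Metric.closedBall (0 : ℂ) r,
      ‖weierstrassFactor (z / l) - 1‖ ≤ 3 * r ^ 3 * ‖l‖⁻¹ ^ 3 := by
  have hfin : (Metric.closedBall (0 : L.lattice) (2 * r)).Finite :=
    (isCompact_closedBall _ _).finite_of_discrete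
  filter_upwards [hfin.compl_mem_cofinite] with l hl z hz
  replace hl : 2 * r < ‖(l : ℂ)‖ := by simpa using hl
  replace hz : ‖z‖ ≤ r := by simpa using hz
  have hl_pos : 0 < ‖(l : ℂ)‖ := by linarith [norm_nonneg z]
  have hzl : ‖z / l‖ ≤ 1 / 2 := by
    rw [norm_div, div_le_iff₀ hl_pos]
    linarith
  calc ‖weierstrassFactor (z / l) - 1‖ ≤ 3 * ‖z / l‖ ^ 3 := norm_weierstrassFactor_sub_one_le hzl
    _ = 3 * ‖z‖ ^ 3 * ‖l‖⁻¹ ^ 3 := by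
      rw [norm_div, div_eq_mul_inv, mul_pow, ← mul_assoc, Submodule.coe_norm]
    _ ≤ 3 * r ^ 3 * ‖l‖⁻¹ ^ 3 := by gcongr

lemma summable_norm_inv_pow_three : Summable fun l : L.lattice ↦ ‖l‖⁻¹ ^ 3 :=
  ZLattice.summable_norm_pow_inv _ 3 (by simp [ZLattice.rank ℝ])

lemma multipliableLocallyUniformlyOn_weierstrassFactor_div :
    MultipliableLocallyUniformlyOn (fun (l : L.lattice) z ↦ weierstrassFactor (z / l))
      Set.univ := by
  refine multipliableLocallyUniformlyOn_of_of_forall_exists_nhds fun x _ ↦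
    ⟨Metric.closedBall 0 (‖x‖ + 1), ?_, ?_⟩
  · rw [nhdsWithin_univ]
    exact mem_of_superset (Metric.isOpen_ball.mem_nhds (by simp)) Metric.ball_subset_closedBall
  · have hcont (l : L.lattice) : Continuous fun z : ℂ ↦ weierstrassFactor (z / l) - 1 :=
      (differentiable_weierstrassFactor.continuous.comp (by fun_prop)).sub continuous_const
    simpa using Summable.multipliableUniformlyOn_one_add (isCompact_closedBall (0 : ℂ) (‖x‖ + 1))
      (L.summable_norm_inv_pow_three.mul_left (3 * (‖x‖ + 1) ^ 3))
      (L.eventually_norm_weierstrassFactor_div_sub_one_le (‖x‖ + 1))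
      fun l ↦ (hcont l).continuousOn

lemma summable_norm_weierstrassFactor_div_sub_one (z : ℂ) :
    Summable fun l : L.lattice ↦ ‖weierstrassFactor (z / l) - 1‖ := by
  refine .of_norm_bounded_eventually
    (L.summable_norm_inv_pow_three.mul_left (3 * ‖z‖ ^ 3)) ?_
  filter_upwards [L.eventually_norm_weierstrassFactor_div_sub_one_le ‖z‖] with l hl
  simpa using hl z (by simp)

lemma sigma_eq_mul_sigmaDivId (z : ℂ) : L.sigma z = z * L.sigmaDivId z := by
  rw [sigma, sigmaDivId, ← L.toPeriodPair.latticeEquivProd.symm.toEquiv.tprod_eq]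
  congr 1
  rw [← tprod_subtype_eq_of_mulSupport_subset (s := {p : ℤ × ℤ | p ≠ 0})]
  · refine tprod_congr fun p ↦ ?_
    simp [coe_latticeEquivProd_symm, weierstrassFactor, div_pow, div_div, mul_comm]
  · rintro p hp rfl
    simp at hp

variable {L} in
lemma differentiable_prod_weierstrassFactor_div (s : Finset L.lattice) :
    Differentiable ℂ fun z ↦ ∏ l ∈ s, weierstrassFactor (z / l) :=
  .fun_finsetProd fun l _ ↦ differentiable_weierstrassFactor_div (l : ℂ)

lemma tendstoLocallyUniformlyOn_sigmaDivId :
    TendstoLocallyUniformlyOn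
      (fun (s : Finset L.lattice) z ↦ ∏ l ∈ s, weierstrassFactor (z / l)) L.sigmaDivId
      atTop Set.univ :=
  L.multipliableLocallyUniformlyOn_weierstrassFactor_div.hasProdLocallyUniformlyOn

lemma differentiable_sigmaDivId : Differentiable ℂ L.sigmaDivId :=
  differentiableOn_univ.mp <| L.tendstoLocallyUniformlyOn_sigmaDivId.differentiableOn
    (.of_forall fun s ↦ (differentiable_prod_weierstrassFactor_div s).differentiableOn)
    isOpen_univ

lemma sigmaDivId_zero : L.sigmaDivId 0 = 1 := by simp [sigmaDivId]

variable {L} in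
lemma div_ne_one_of_notMem {z : ℂ} (hz : z ∉ L.lattice) (l : L.lattice) : z / l ≠ 1 :=
  fun h ↦ hz (eq_of_div_eq_one h ▸ l.2)

variable {L} in
lemma sigmaDivId_ne_zero {z : ℂ} (hz : z ∉ L.lattice) : L.sigmaDivId z ≠ 0 := by
  simpa [sigmaDivId] using tprod_one_add_ne_zero_of_summable
    (f := fun l : L.lattice ↦ weierstrassFactor (z / l) - 1)
    (fun l ↦ by simpa using weierstrassFactor_ne_zero (div_ne_one_of_notMem hz l))
    (L.summable_norm_weierstrassFactor_div_sub_one z)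

lemma differentiable_sigma : Differentiable ℂ L.sigma := by
  rw [funext L.sigma_eq_mul_sigmaDivId]
  exact differentiable_id.mul L.differentiable_sigmaDivId

lemma continuous_sigma : Continuous L.sigma := L.differentiable_sigma.continuous

@[simp] lemma sigma_zero : L.sigma 0 = 0 := by simp [sigma]

lemma deriv_sigma_zero : deriv L.sigma 0 = 1 := by
  rw [funext L.sigma_eq_mul_sigmaDivId,
    ((hasDerivAt_id' _).fun_mul (L.differentiable_sigmaDivId 0).hasDerivAt).deriv]
  simp [sigmaDivId_zero]

@[simp] lemma sigma_neg (z : ℂ) : L.sigma (-z) = -L.sigma z := by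
  rw [sigma_eq_mul_sigmaDivId, sigma_eq_mul_sigmaDivId, neg_mul, sigmaDivId,
    ← (Equiv.neg L.lattice).tprod_eq]
  simp [sigmaDivId]

variable {L} in
lemma sigma_ne_zero {z : ℂ} (hz : z ∉ L.lattice) : L.sigma z ≠ 0 := by
  rw [sigma_eq_mul_sigmaDivId]
  exact mul_ne_zero (fun h ↦ hz (h ▸ zero_mem _)) (sigmaDivId_ne_zero hz)

variable {L} in
lemma hasDerivAt_sigma {z : ℂ} (hz : z ∉ L.lattice) :
    HasDerivAt L.sigma (L.zeta z * L.sigma z) z := by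
  rw [zeta, div_mul_cancel₀ _ (sigma_ne_zero hz)]
  exact (L.differentiable_sigma z).hasDerivAt

lemma zeta_neg (z : ℂ) : L.zeta (-z) = -L.zeta z := by
  have h : deriv L.sigma (-z) = deriv L.sigma z := by
    simpa [deriv.fun_neg] using (deriv_comp_neg L.sigma z).symm
  rw [zeta, zeta, h, sigma_neg, div_neg]

variable {L} in
lemma zeta_eq_inv_add_logDeriv {z : ℂ} (hz : z ∉ L.lattice) :
    L.zeta z = z⁻¹ + logDeriv L.sigmaDivId z := by
  have h := logDeriv_mul (f := id) z (by rintro rfl; exact hz (zero_mem _)) (sigmaDivId_ne_zero hz)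
    differentiableAt_id (L.differentiable_sigmaDivId z)
  rw [logDeriv_id] at h
  rw [← one_div, ← h, zeta, ← logDeriv_apply, funext L.sigma_eq_mul_sigmaDivId]
  rfl

variable {L} in
lemma hasDerivAt_logDeriv_prod_weierstrassFactor_div {z : ℂ} (hz : z ∉ L.lattice)
    (s : Finset L.lattice) :
    HasDerivAt (logDeriv fun w ↦ ∏ l ∈ s, weierstrassFactor (w / l))
      (∑ l ∈ s, -(if (l : ℂ) = 0 then 0 else 1 / (z - l) ^ 2 - 1 / (l : ℂ) ^ 2)) z := by
  have hlog : logDeriv (fun w ↦ ∏ l ∈ s, weierstrassFactor (w / l)) =ᶠ[𝓝 z]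
      fun w ↦ ∑ l ∈ s, logDeriv (fun w ↦ weierstrassFactor (w / l)) w := by
    filter_upwards [L.isOpen_compl_lattice.mem_nhds hz] with w hw
    exact logDeriv_prod (fun l _ ↦ weierstrassFactor_ne_zero (div_ne_one_of_notMem hw l))
      fun l _ ↦ differentiable_weierstrassFactor_div (l : ℂ) w
  refine HasDerivAt.congr_of_eventuallyEq (.fun_sum fun l _ ↦ ?_) hlog
  refine (hasDerivAt_logDeriv_weierstrassFactor_div (div_ne_one_of_notMem hz l)).congr_deriv ?_
  split_ifs with hl
  · simp [hl]
  · have hzl : 1 - z / l = (z - l) / -l := by field_simp; ring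
    have : z - l ≠ 0 := sub_ne_zero.mpr fun h ↦ hz (h ▸ l.2)
    rw [hzl]
    field_simp
    ring

variable {L} in
lemma deriv_logDeriv_sigmaDivId {z : ℂ} (hz : z ∉ L.lattice) :
    deriv (logDeriv L.sigmaDivId) z = -L.toPeriodPair.weierstrassPExcept 0 z := by
  refine tendsto_nhds_unique (tendsto_deriv_logDeriv
    (L.tendstoLocallyUniformlyOn_sigmaDivId.mono (Set.subset_univ (L.lattice : Set ℂ)ᶜ))
    (.of_forall fun s ↦ (differentiable_prod_weierstrassFactor_div s).differentiableOn)
    L.isOpen_compl_lattice (fun w hw ↦ sigmaDivId_ne_zero hw)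
    (.of_forall fun s w hw ↦ Finset.prod_ne_zero_iff.mpr fun l _ ↦
      weierstrassFactor_ne_zero (div_ne_one_of_notMem hw l)) hz) ?_
  refine (L.toPeriodPair.hasSum_weierstrassPExcept 0 z).neg.congr fun s ↦ ?_
  exact (hasDerivAt_logDeriv_prod_weierstrassFactor_div hz s).deriv.symm

variable {L} in
lemma hasDerivAt_zeta {z : ℂ} (hz : z ∉ L.lattice) :
    HasDerivAt L.zeta (-L.toPeriodPair.weierstrassP z) z := by
  have hz0 : z ≠ 0 := by rintro rfl; exact hz (zero_mem _)
  have hlog : DifferentiableAt ℂ (logDeriv L.sigmaDivId) z :=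
    (L.differentiable_sigmaDivId.deriv z).div (L.differentiable_sigmaDivId z)
      (sigmaDivId_ne_zero hz)
  have hzeta : L.zeta =ᶠ[𝓝 z] fun w ↦ w⁻¹ + logDeriv L.sigmaDivId w := by
    filter_upwards [L.isOpen_compl_lattice.mem_nhds hz] with w hw
    exact zeta_eq_inv_add_logDeriv hw
  refine (((hasDerivAt_inv hz0).fun_add hlog.hasDerivAt).congr_of_eventuallyEq hzeta).congr_deriv ?_
  rw [deriv_logDeriv_sigmaDivId hz, ← L.toPeriodPair.weierstrassPExcept_add 0 z]
  simp

lemma exists_zeta_add (l : L.lattice) : ∃ η, ∀ z ∉ L.lattice, L.zeta (z + l) = L.zeta z + η := by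
  have hderiv : ∀ z ∈ (L.lattice : Set ℂ)ᶜ,
      HasDerivAt (fun z ↦ L.zeta (z + l) - L.zeta z) 0 z := fun z hz ↦ by
    have hzl : z + l ∉ L.lattice := (L.lattice.add_mem_iff_left l.2).not.mpr hz
    have h := ((hasDerivAt_zeta hzl).comp_add_const z l).fun_sub (hasDerivAt_zeta hz)
    rwa [PeriodPair.weierstrassP_add_coe, sub_self] at h
  obtain ⟨η, hη⟩ := L.isOpen_compl_lattice.exists_is_const_of_deriv_eq_zero
    L.isPreconnected_compl_lattice
    (fun z hz ↦ (hderiv z hz).differentiableAt.differentiableWithinAt)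
    fun z hz ↦ (hderiv z hz).deriv
  exact ⟨η, fun z hz ↦ by rw [← hη z hz]; ring⟩

lemma exists_sigma_add (l : L.lattice) :
    ∃ C η : ℂ, C ≠ 0 ∧ ∀ z, L.sigma (z + l) = C * Complex.exp (η * z) * L.sigma z := by
  obtain ⟨η, hη⟩ := L.exists_zeta_add l
  have hadd {z : ℂ} (hz : z ∉ L.lattice) : z + l ∉ L.lattice :=
    (L.lattice.add_mem_iff_left l.2).not.mpr hz
  have hlog : Set.EqOn (logDeriv fun z ↦ L.sigma (z + l))
      (logDeriv fun z ↦ Complex.exp (η * z) * L.sigma z) (L.lattice : Set ℂ)ᶜ := fun z hz ↦ by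
    have hexp : HasDerivAt (fun z ↦ Complex.exp (η * z)) (Complex.exp (η * z) * η) z := by
      simpa using ((hasDerivAt_id z).const_mul η).cexp
    rw [logDeriv_apply, ((hasDerivAt_sigma (hadd hz)).comp_add_const z l).deriv, logDeriv_apply,
      (hexp.fun_mul (hasDerivAt_sigma hz)).deriv, hη z hz]
    have := sigma_ne_zero hz
    have := sigma_ne_zero (hadd hz)
    field_simp
    ring
  have hdiff : Differentiable ℂ fun z ↦ L.sigma (z + l) :=
    L.differentiable_sigma.comp (by fun_prop)
  have hdiff' : Differentiable ℂ fun z ↦ Complex.exp (η * z) * L.sigma z :=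
    Differentiable.mul (by fun_prop) L.differentiable_sigma
  obtain ⟨C, hC, h⟩ := (logDeriv_eqOn_iff hdiff.differentiableOn hdiff'.differentiableOn
    L.isOpen_compl_lattice L.isPreconnected_compl_lattice
    (fun z hz ↦ mul_ne_zero (Complex.exp_ne_zero _) (sigma_ne_zero hz))
    fun z hz ↦ sigma_ne_zero (hadd hz)).mp hlog
  refine ⟨C, η, hC, fun z ↦ ?_⟩
  simpa [mul_assoc] using congrFun (Continuous.ext_on L.dense_compl_lattice hdiff.continuous
    (continuous_const.mul hdiff'.continuous) h) z

variable {L} in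
@[simp] lemma sigma_eq_zero_iff {z : ℂ} : L.sigma z = 0 ↔ z ∈ L.lattice := by
  refine ⟨fun h ↦ by_contra fun hz ↦ sigma_ne_zero hz h, fun hz ↦ ?_⟩
  obtain ⟨C, η, -, h⟩ := L.exists_sigma_add ⟨z, hz⟩
  simpa using h 0

variable {L} in
lemma deriv_sigma_ne_zero {l : ℂ} (hl : l ∈ L.lattice) : deriv L.sigma l ≠ 0 := by
  obtain ⟨C, η, hC, h⟩ := L.exists_sigma_add ⟨l, hl⟩
  have hmul : HasDerivAt (fun z ↦ C * Complex.exp (η * z) * L.sigma z) C 0 := by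
    have hexp : DifferentiableAt ℂ (fun z ↦ C * Complex.exp (η * z)) 0 := by fun_prop
    simpa [L.deriv_sigma_zero] using hexp.hasDerivAt.fun_mul (L.differentiable_sigma 0).hasDerivAt
  have hshift : deriv L.sigma l = C := by
    rw [← hmul.deriv, ← funext h, deriv_comp_add_const, zero_add]
  rwa [hshift]

/-! ### The three-term identity -/

/-- The product `σ(x + a)σ(x − a)`, the building block of the three-term identity. -/
def sigmaPair (a x : ℂ) : ℂ := L.sigma (x + a) * L.sigma (x - a)

lemma sigmaPair_swap (a x : ℂ) : L.sigmaPair a x = -L.sigmaPair x a := by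
  rw [sigmaPair, sigmaPair, add_comm, ← neg_sub a x, sigma_neg, mul_neg]

lemma sigmaPair_neg (a x : ℂ) : L.sigmaPair a (-x) = L.sigmaPair a x := by
  rw [sigmaPair, sigmaPair, show -x + a = -(x - a) by ring, show -x - a = -(x + a) by ring,
    sigma_neg, sigma_neg, neg_mul_neg, mul_comm]

lemma sigmaPair_self (a : ℂ) : L.sigmaPair a a = 0 := by simp [sigmaPair]

variable {L} in
lemma sigmaPair_eq_zero_iff {a x : ℂ} :
    L.sigmaPair a x = 0 ↔ x + a ∈ L.lattice ∨ x - a ∈ L.lattice := by simp [sigmaPair]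

lemma hasDerivAt_sigmaPair (a x : ℂ) :
    HasDerivAt (L.sigmaPair a)
      (deriv L.sigma (x + a) * L.sigma (x - a) + L.sigma (x + a) * deriv L.sigma (x - a)) x :=
  ((L.differentiable_sigma _).hasDerivAt.comp_add_const x a).fun_mul
    ((L.differentiable_sigma _).hasDerivAt.comp_sub_const x a)

lemma differentiable_sigmaPair (a : ℂ) : Differentiable ℂ (L.sigmaPair a) :=
  fun x ↦ (L.hasDerivAt_sigmaPair a x).differentiableAt

variable {L} in
lemma deriv_sigmaPair_ne_zero {a x : ℂ} (ha : a + a ∉ L.lattice) (hx : L.sigmaPair a x = 0) :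
    deriv (L.sigmaPair a) x ≠ 0 := by
  rw [(L.hasDerivAt_sigmaPair a x).deriv]
  have hsub : a + a = (x + a) - (x - a) := by ring
  rcases sigmaPair_eq_zero_iff.mp hx with h | h
  · have h' : x - a ∉ L.lattice := fun h' ↦ ha (hsub ▸ sub_mem h h')
    rw [sigma_eq_zero_iff.mpr h, zero_mul, add_zero]
    exact mul_ne_zero (deriv_sigma_ne_zero h) (sigma_ne_zero h')
  · have h' : x + a ∉ L.lattice := fun h' ↦ ha (hsub ▸ sub_mem h' h)
    rw [sigma_eq_zero_iff.mpr h, mul_zero, zero_add]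
    exact mul_ne_zero (sigma_ne_zero h') (deriv_sigma_ne_zero h)

lemma exists_sigmaPair_add (l : L.lattice) (x : ℂ) :
    ∃ c : ℂ, c ≠ 0 ∧ ∀ a, L.sigmaPair a (x + l) = c * L.sigmaPair a x := by
  obtain ⟨C, η, hC, h⟩ := L.exists_sigma_add l
  refine ⟨C ^ 2 * Complex.exp (2 * η * x),
    mul_ne_zero (pow_ne_zero 2 hC) (Complex.exp_ne_zero _), fun a ↦ ?_⟩
  rw [sigmaPair, sigmaPair, add_right_comm, h, add_sub_right_comm, h,
    show 2 * η * x = η * (x + a) + η * (x - a) by ring, Complex.exp_add]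
  ring

lemma sigmaPair_three_term_of_notMem {y z : ℂ} (x w : ℂ) (hy : y + y ∉ L.lattice)
    (hyz : L.sigmaPair y z ≠ 0) :
    L.sigmaPair y x * L.sigmaPair w z + L.sigmaPair z x * L.sigmaPair y w +
      L.sigmaPair w x * L.sigmaPair z y = 0 := by
  set f : ℂ → ℂ := fun x ↦ L.sigmaPair y x * L.sigmaPair w z + L.sigmaPair z x * L.sigmaPair y w +
    L.sigmaPair w x * L.sigmaPair z y with hf
  have hmul : ∀ l ∈ L.lattice, ∀ x, ∃ c : ℂ, c ≠ 0 ∧ f (x + l) = c * f x ∧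
      L.sigmaPair y (x + l) = c * L.sigmaPair y x := fun l hl x ↦ by
    obtain ⟨c, hc, h⟩ := L.exists_sigmaPair_add ⟨l, hl⟩ x
    refine ⟨c, hc, ?_, h y⟩
    simp only [hf, h]
    ring
  have hfy : f y = 0 := by
    simp only [hf, sigmaPair_self, L.sigmaPair_swap y w]
    ring
  have hfy_neg : f (-y) = 0 := by simpa only [hf, sigmaPair_neg] using hfy
  have hfz : f z = 0 := by
    simp only [hf, sigmaPair_self, L.sigmaPair_swap z y]
    ring
  have hzero : ∀ x, L.sigmaPair y x = 0 → f x = 0 ∧ deriv (L.sigmaPair y) x ≠ 0 := fun x hx ↦ by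
    refine ⟨?_, deriv_sigmaPair_ne_zero hy hx⟩
    rcases sigmaPair_eq_zero_iff.mp hx with h | h
    · obtain ⟨c, -, hc, -⟩ := hmul _ h (-y)
      simpa [hfy_neg] using hc
    · obtain ⟨c, -, hc, -⟩ := hmul _ h y
      simpa [hfy] using hc
  have hdiff : Differentiable ℂ f :=
    (((L.differentiable_sigmaPair y).mul_const _).add
      ((L.differentiable_sigmaPair z).mul_const _)).add ((L.differentiable_sigmaPair w).mul_const _)
  exact congrFun (eq_zero_of_common_multiplier L.lattice hdiff (L.differentiable_sigmaPair y) hmul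
    hzero hfz hyz) x

lemma sigmaPair_three_term (x y z w : ℂ) :
    L.sigmaPair y x * L.sigmaPair w z + L.sigmaPair z x * L.sigmaPair y w +
      L.sigmaPair w x * L.sigmaPair z y = 0 := by
  have hcount : {y | y + y ∈ L.lattice ∨ z + y ∈ L.lattice ∨ z - y ∈ L.lattice}.Countable := by
    have hΛ := L.countable_lattice
    refine .union (hΛ.preimage fun a b h ↦ ?_)
      (.union (hΛ.preimage (add_right_injective z)) (hΛ.preimage (sub_right_injective)))
    linear_combination h / 2
  have hcont : Continuous fun y ↦ L.sigmaPair y x * L.sigmaPair w z +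
      L.sigmaPair z x * L.sigmaPair y w + L.sigmaPair w x * L.sigmaPair z y := by
    have := L.continuous_sigma
    unfold sigmaPair
    fun_prop
  refine congrFun (Continuous.ext_on (hcount.dense_compl ℝ) hcont continuous_const
    fun y hy ↦ ?_) y
  simp only [Set.mem_compl_iff, Set.mem_ofPred_eq, not_or] at hy
  refine L.sigmaPair_three_term_of_notMem x w hy.1 ?_
  simpa [sigmaPair_eq_zero_iff, not_or] using hy.2

variable {L}

@[simp] lemma neg_notMem_iff {z : ℂ} : -z ∉ L.lattice ↔ z ∉ L.lattice := neg_mem_iff.not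

/-! ### Addition formulas for `Φ` and `χ` -/

lemma Phi_neg_neg (x y : ℂ) : L.Phi (-x) (-y) = -L.Phi x y := by
  rw [Phi, ← neg_add, sigma_neg, sigma_neg, sigma_neg, neg_mul_neg, neg_div, Phi]

lemma Phi_comm (x y : ℂ) : L.Phi x y = L.Phi y x := by
  rw [Phi, Phi, add_comm, mul_comm (L.sigma x)]

lemma Phi_ne_zero {x y : ℂ} (hx : x ∉ L.lattice) (hy : y ∉ L.lattice) (hxy : x + y ∉ L.lattice) :
    L.Phi x y ≠ 0 :=
  div_ne_zero (sigma_ne_zero hxy) (mul_ne_zero (sigma_ne_zero hx) (sigma_ne_zero hy))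

lemma exp_mul_Psi (x y : ℂ) : Complex.exp (L.zeta x * y) * L.Psi x y = L.Phi x y := by
  rw [Psi, mul_left_comm, ← Complex.exp_add, neg_mul, add_neg_cancel, Complex.exp_zero, mul_one]

lemma sigma_mul_sigma_eq_sigmaPair (u v : ℂ) :
    L.sigma u * L.sigma v = L.sigmaPair ((u - v) / 2) ((u + v) / 2) := by
  rw [sigmaPair]
  congr 2 <;> ring

lemma sigma_three_term (ξ δ κ κ' : ℂ) :
    L.sigma (ξ + δ + κ') * L.sigma (ξ + κ) * (L.sigma δ * L.sigma (κ + κ')) +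
      L.sigma (ξ + δ + (κ + κ')) * L.sigma ξ * (L.sigma (δ + -κ) * L.sigma (-κ')) +
      L.sigma (ξ + δ) * L.sigma (ξ + (κ + κ')) * (L.sigma (δ + κ') * L.sigma (-κ)) = 0 := by
  simp only [sigma_mul_sigma_eq_sigmaPair]
  convert L.sigmaPair_three_term (ξ + (δ + κ + κ') / 2) ((δ + κ' - κ) / 2) ((δ + κ + κ') / 2)
    ((δ - κ - κ') / 2) using 5 <;> ring

lemma Phi_neg_mul_Phi_add {δ ξ κ κ' : ℂ} (hδ : δ ∉ L.lattice) (hξ : ξ ∉ L.lattice)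
    (hξδ : ξ + δ ∉ L.lattice) (hκ : κ ∉ L.lattice) (hκ' : κ' ∉ L.lattice)
    (hκκ' : κ + κ' ∉ L.lattice) :
    L.Phi δ (-κ) * L.Phi (ξ + δ) (κ + κ') =
      L.Phi δ κ' * L.Phi ξ (κ + κ') - L.Phi ξ κ * L.Phi (ξ + δ) κ' := by
  have := sigma_ne_zero hδ
  have := sigma_ne_zero hξ
  have := sigma_ne_zero hξδ
  have := sigma_ne_zero hκ
  have := sigma_ne_zero hκ'
  have := sigma_ne_zero hκκ'
  have h := L.sigma_three_term ξ δ κ κ'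
  rw [L.sigma_neg κ, L.sigma_neg κ'] at h
  simp only [Phi, L.sigma_neg κ]
  field_simp
  linear_combination h

lemma deriv_sigma_eq {z : ℂ} (hz : z ∉ L.lattice) : deriv L.sigma z = L.zeta z * L.sigma z :=
  (hasDerivAt_sigma hz).deriv

lemma sigmaPair_three_term_deriv (y z w : ℂ) :
    deriv (L.sigmaPair y) y * L.sigmaPair w z + deriv (L.sigmaPair z) y * L.sigmaPair y w +
      deriv (L.sigmaPair w) y * L.sigmaPair z y = 0 := by
  have h (a : ℂ) : HasDerivAt (L.sigmaPair a) (deriv (L.sigmaPair a) y) y :=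
    (L.differentiable_sigmaPair a y).hasDerivAt
  have hsum := (((h y).mul_const (L.sigmaPair w z)).add ((h z).mul_const (L.sigmaPair y w))).add
    ((h w).mul_const (L.sigmaPair z y))
  refine hsum.unique ((hasDerivAt_const y (0 : ℂ)).congr_of_eventuallyEq (.of_forall fun x ↦ ?_))
  exact L.sigmaPair_three_term x y z w

lemma deriv_sigmaPair_self (y : ℂ) : deriv (L.sigmaPair y) y = L.sigma (y + y) := by
  rw [(L.hasDerivAt_sigmaPair y y).deriv, sub_self, sigma_zero, deriv_sigma_zero, mul_zero,
    mul_one, zero_add]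

lemma deriv_sigmaPair_eq {a x : ℂ} (hadd : x + a ∉ L.lattice) (hsub : x - a ∉ L.lattice) :
    deriv (L.sigmaPair a) x = (L.zeta (x + a) + L.zeta (x - a)) * L.sigmaPair a x := by
  rw [(L.hasDerivAt_sigmaPair a x).deriv, deriv_sigma_eq hadd, deriv_sigma_eq hsub, sigmaPair]
  ring

lemma chi_eq {a b c : ℂ} (ha : a ∉ L.lattice) (hb : b ∉ L.lattice) (hc : c ∉ L.lattice)
    (habc : c + a + b ∉ L.lattice) :
    L.chi a b c = L.sigma (a + b) * L.sigma (c + a) * L.sigma (c + b) /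
      (L.sigma a * L.sigma b * L.sigma c * L.sigma (c + a + b)) := by
  -- In these variables the claim is the derivative in `x` of the three-term identity at `x = y`.
  obtain ⟨y, z, w, rfl, rfl, rfl⟩ : ∃ y z w, a = y + z ∧ b = y - z ∧ c = w - y :=
    ⟨(a + b) / 2, (a - b) / 2, c + (a + b) / 2, by ring, by ring, by ring⟩
  have hsum : w - y + (y + z) + (y - z) = y + w := by ring
  have hc' : y - w ∉ L.lattice := by rwa [← neg_notMem_iff, neg_sub]
  rw [hsum] at habc
  have h := L.sigmaPair_three_term_deriv y z w
  rw [deriv_sigmaPair_self, deriv_sigmaPair_eq ha hb, deriv_sigmaPair_eq habc hc', ← neg_sub w y,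
    zeta_neg] at h
  simp only [sigmaPair, ← neg_sub w y, sigma_neg, add_comm w y] at h
  rw [chi, hsum, show w - y + (y + z) = z + w by ring, show w - y + (y - z) = -(z - w) by ring,
    sigma_neg, add_add_sub_cancel, eq_div_iff (by simp [ha, hb, hc, habc])]
  linear_combination h

lemma Phi_mul_Phi {a b c : ℂ} (ha : a ∉ L.lattice) (hb : b ∉ L.lattice) (hc : c ∉ L.lattice)
    (hab : a + b ∉ L.lattice) (habc : c + a + b ∉ L.lattice) :
    L.Phi c a * L.Phi c b = L.chi a b c * L.Phi c (a + b) := by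
  have := sigma_ne_zero ha
  have := sigma_ne_zero hb
  have := sigma_ne_zero hc
  have := sigma_ne_zero hab
  have := sigma_ne_zero habc
  rw [chi_eq ha hb hc habc, Phi, Phi, Phi, ← add_assoc]
  field_simp

lemma inv_chi_mul_Phi {α κ ξ : ℂ} (hα : α ∉ L.lattice) (hκ : κ ∉ L.lattice) (hξ : ξ ∉ L.lattice)
    (hακ : α + κ ∉ L.lattice) (hξα : ξ + α ∉ L.lattice) (hξακ : ξ + α + κ ∉ L.lattice)
    (hχ : L.chi α κ ξ ≠ 0) :
    (L.chi α κ ξ)⁻¹ * L.Phi ξ κ = L.Phi ξ (α + κ) / L.Phi ξ α := by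
  rw [inv_mul_eq_div, div_eq_div_iff hχ (Phi_ne_zero hξ hα hξα), mul_comm,
    Phi_mul_Phi hα hκ hξ hακ hξακ, mul_comm]

lemma Phi_add_inv_chi_mul_Phi {α κ δ ξ : ℂ} (hα : α ∉ L.lattice) (hκ : κ ∉ L.lattice)
    (hδ : δ ∉ L.lattice) (hακ : α + κ ∉ L.lattice) (hξ : ξ ∉ L.lattice) (hξα : ξ + α ∉ L.lattice)
    (hξακ : ξ + α + κ ∉ L.lattice) (hξδ : ξ + δ ∉ L.lattice) (hξδα : ξ + δ + α ∉ L.lattice)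
    (hξδακ : ξ + δ + α + κ ∉ L.lattice) (hχ : L.chi α κ ξ ≠ 0) (hχδ : L.chi α κ (ξ + δ) ≠ 0) :
    L.Phi ξ κ + (L.chi α κ (ξ + δ))⁻¹ * (L.Phi δ (-κ) * L.Phi (ξ + δ) κ) =
      L.chi α δ ξ * ((L.chi α κ ξ)⁻¹ * L.Phi ξ κ) := by
  have hΦ : L.Phi (ξ + δ) α ≠ 0 := Phi_ne_zero hξδ hα hξδα
  have hfay := Phi_neg_mul_Phi_add hδ hξ hξδ hκ hα (by rwa [add_comm])
  have hchi : L.chi α δ ξ * L.Phi (ξ + δ) α = L.Phi ξ α * L.Phi δ α := by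
    have h := Phi_mul_Phi hξ hδ hα hξδ (by rwa [add_comm α, add_right_comm])
    rw [Phi_comm α, Phi_comm α, Phi_comm α] at h
    rw [h, chi, chi]
    ring_nf
  have hΦ₀ : L.Phi ξ α ≠ 0 := Phi_ne_zero hξ hα hξα
  rw [mul_left_comm, inv_chi_mul_Phi hα hκ hξδ hακ hξδα hξδακ hχδ,
    inv_chi_mul_Phi hα hκ hξ hακ hξα hξακ hχ, add_comm α]
  field_simp
  linear_combination L.Phi ξ α * hfay - L.Phi ξ (κ + α) * hchi

end EllLattice

/-! ### Rank-one perturbation of a resolvent -/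

section Resolvent

variable {ι ι' R : Type*} [Fintype ι] [Fintype ι'] [DecidableEq ι] [CommRing R]

lemma inv_diagonal_mulVec {K : Type*} [Field K] {d : ι → K} (hd : ∀ i, d i ≠ 0) (v : ι → K) :
    (diagonal d)⁻¹ *ᵥ v = fun i ↦ (d i)⁻¹ * v i := by
  have h : (diagonal d)⁻¹ = diagonal fun i ↦ (d i)⁻¹ :=
    inv_eq_right_inv (by simp [hd])
  ext i
  rw [h, mulVec_diagonal]

/-- The resolvent kernel `C(1 + MC)⁻¹` through which `V`, `W` and `S` depend on the dressed Cauchy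
matrix `M`; junk unless `1 + MC` is invertible. -/
def resolventKernel (C : Matrix ι' ι R) (M : Matrix ι ι' R) : Matrix ι' ι R :=
  C * (1 + M * C)⁻¹

lemma resolventKernel_eq_inv_mul [DecidableEq ι'] {C : Matrix ι' ι R} {M : Matrix ι ι' R}
    (hM : IsUnit (1 + M * C).det) : resolventKernel C M = (1 + C * M)⁻¹ * C := by
  have hM' : IsUnit (1 + C * M).det := by rwa [det_one_add_mul_comm]
  have hcomm : C * (1 + M * C) = (1 + C * M) * C := by
    rw [Matrix.mul_add, Matrix.add_mul, Matrix.mul_one, Matrix.one_mul, Matrix.mul_assoc]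
  calc C * (1 + M * C)⁻¹
    _ = (1 + C * M)⁻¹ * ((1 + C * M) * C) * (1 + M * C)⁻¹ := by
      rw [nonsing_inv_mul_cancel_left _ C hM']
    _ = (1 + C * M)⁻¹ * C := by
      rw [← hcomm, ← Matrix.mul_assoc, mul_nonsing_inv_cancel_right _ _ hM]

lemma resolventKernel_sub {C : Matrix ι' ι R} {M M' : Matrix ι ι' R}
    (hM : IsUnit (1 + M * C).det) (hM' : IsUnit (1 + M' * C).det) :
    resolventKernel C M' - resolventKernel C M =
      resolventKernel C M * (M - M') * resolventKernel C M' := by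
  have hinv : (1 + M' * C)⁻¹ - (1 + M * C)⁻¹ =
      (1 + M * C)⁻¹ * ((M - M') * C) * (1 + M' * C)⁻¹ := by
    have hunit := iff_of_true ((isUnit_iff_isUnit_det _).mpr hM)
      ((isUnit_iff_isUnit_det _).mpr hM')
    rw [← neg_sub, inv_sub_inv hunit, ← neg_mul, ← mul_neg, neg_sub, add_sub_add_left_eq_sub,
      Matrix.sub_mul]
  simp only [resolventKernel, ← Matrix.mul_sub, hinv, Matrix.mul_assoc]

/-- The bilinear form `⟨u, v⟩ = uᵀC(1 + MC)⁻¹v`. -/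
def resolventForm [DecidableEq ι'] (C : Matrix ι' ι R) (M : Matrix ι ι' R) :
    (ι' → R) →ₗ[R] (ι → R) →ₗ[R] R :=
  toLinearMap₂' R (resolventKernel C M)

lemma resolventForm_apply [DecidableEq ι'] (C : Matrix ι' ι R) (M : Matrix ι ι' R) (u : ι' → R)
    (v : ι → R) : resolventForm C M u v = u ⬝ᵥ resolventKernel C M *ᵥ v :=
  toLinearMap₂'_apply' ..

lemma resolventForm_mul_resolventForm_of_sub_vecMulVec [DecidableEq ι'] {C : Matrix ι' ι R}
    {M : Matrix ι ι' R} {r : ι → R} {s : ι' → R} (hM : IsUnit (1 + M * C).det)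
    (hM' : IsUnit (1 + (M - vecMulVec r s) * C).det) (u : ι' → R) (v : ι → R) :
    resolventForm C M u r * resolventForm C (M - vecMulVec r s) s v =
      resolventForm C (M - vecMulVec r s) u v - resolventForm C M u v := by
  simp only [resolventForm_apply]
  rw [← dotProduct_sub, ← sub_mulVec, resolventKernel_sub hM hM', sub_sub_cancel, ← mulVec_mulVec,
    ← mulVec_mulVec, vecMulVec_mulVec, op_smul_eq_smul, mulVec_smul, dotProduct_smul, smul_eq_mul,
    mul_comm]

lemma one_sub_resolventForm_mul_one_sub_resolventForm [DecidableEq ι'] {C : Matrix ι' ι R}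
    {M M' : Matrix ι ι' R} {r x x' : ι → R} {s' y y' : ι' → R} {p q : R}
    (hM : IsUnit (1 + M * C).det) (hM' : IsUnit (1 + M' * C).det)
    (hrank : M' = M - vecMulVec r s') (hx : r + x' = p • x) (hy : s' = y + q • y') :
    (1 - resolventForm C M y r) * (1 - resolventForm C M' s' x') =
      1 - q * resolventForm C M' y' x' - p * resolventForm C M y x := by
  have hmul : resolventForm C M y r * resolventForm C M' s' x' =
      resolventForm C M' y x' - resolventForm C M y x' := by
    subst hrank
    exact resolventForm_mul_resolventForm_of_sub_vecMulVec hM hM' y x'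
  have hr : resolventForm C M y r + resolventForm C M y x' = p * resolventForm C M y x := by
    rw [← map_add, hx, map_smul, smul_eq_mul]
  have hs : resolventForm C M' s' x' =
      resolventForm C M' y x' + q * resolventForm C M' y' x' := by
    rw [hy, map_add, map_smul, LinearMap.add_apply, LinearMap.smul_apply, smul_eq_mul]
  linear_combination hmul - hr - hs

end Resolvent

/-! ### Lattice steps of the soliton data -/

namespace KPData

variable {N N' : ℕ} (D : KPData N N')

/-- The displacement `nδ + mε + hλ` of `ξ` from the base point. -/
def shift (n m h : ℤ) : ℂ := n • D.del + m • D.eps + h • D.lam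

/-- The plane-wave factor `ρ_i` stripped of its exponential `e^{ζ(ξ)κ_i}`, which turns `Ψ_ξ` into
`Φ_ξ`. -/
def ampρ (i : Fin N) (n m h : ℤ) : ℂ :=
  D.L.Phi D.del (-D.κ i) ^ n * D.L.Phi D.eps (-D.κ i) ^ m * D.L.Phi D.lam (-D.κ i) ^ h * D.ρ0 i

/-- The plane-wave factor `ν_j` stripped of its exponential `e^{ζ(ξ)κ′_j}`. -/
def ampν (j : Fin N') (n m h : ℤ) : ℂ :=
  D.L.Phi D.del (D.κ' j) ^ (-n) * D.L.Phi D.eps (D.κ' j) ^ (-m) * D.L.Phi D.lam (D.κ' j) ^ (-h) *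
    D.ν0 j

lemma ρ_eq (i : Fin N) (n m h : ℤ) :
    D.ρ i n m h = D.ampρ i n m h * Complex.exp (D.L.zeta (D.xi n m h) * D.κ i) := by
  simp only [ρ, ampρ, neg_mul, ← mul_neg, EllLattice.exp_mul_Psi]
  exact mul_right_comm _ _ _

lemma ν_eq (j : Fin N') (n m h : ℤ) :
    D.ν j n m h = D.ampν j n m h * Complex.exp (D.L.zeta (D.xi n m h) * D.κ' j) := by
  simp only [ν, ampν, EllLattice.exp_mul_Psi]
  exact mul_right_comm _ _ _

lemma r_apply (n m h : ℤ) (i : Fin N) :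
    D.r n m h i = D.ampρ i n m h * D.L.Phi (D.xi n m h) (D.κ i) := by
  rw [r, ρ_eq, mul_assoc, EllLattice.exp_mul_Psi]

lemma s_apply (n m h : ℤ) (j : Fin N') :
    D.s n m h j = D.ampν j n m h * D.L.Phi (D.xi n m h) (D.κ' j) := by
  rw [s, ν_eq, mul_assoc, EllLattice.exp_mul_Psi]

lemma M_apply (n m h : ℤ) (i : Fin N) (j : Fin N') :
    D.M n m h i j =
      D.ampρ i n m h * D.L.Phi (D.xi n m h) (D.κ i + D.κ' j) * D.ampν j n m h := by
  rw [M, of_apply, ρ_eq, ν_eq, ← EllLattice.exp_mul_Psi, mul_add, Complex.exp_add]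
  ring

/-- The dressed vector `(χ_{α,K}(ξ))⁻¹ r` entering `V` and `S`. -/
def dressedR (α : ℂ) (n m h : ℤ) : Fin N → ℂ := (D.DK α n m h)⁻¹ *ᵥ D.r n m h

/-- The dressed vector `(χ_{β,K′}(ξ))⁻¹ s` entering `W` and `S`. -/
def dressedS (β : ℂ) (n m h : ℤ) : Fin N' → ℂ := (D.DK' β n m h)⁻¹ *ᵥ D.s n m h

lemma s_dotProduct_inv_DK'_mulVec (β : ℂ) (n m h : ℤ) (v : Fin N' → ℂ) :
    D.s n m h ⬝ᵥ (D.DK' β n m h)⁻¹ *ᵥ v = D.dressedS β n m h ⬝ᵥ v := by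
  rw [dressedS, dotProduct_mulVec, ← mulVec_transpose, transpose_nonsing_inv, DK',
    diagonal_transpose]

lemma W_eq (β : ℂ) (n m h : ℤ) :
    D.W β n m h = 1 - resolventForm D.C (D.M n m h) (D.dressedS β n m h) (D.r n m h) := by
  rw [W, s_dotProduct_inv_DK'_mulVec, mulVec_mulVec, resolventForm_apply, resolventKernel]

lemma S_eq (β α : ℂ) (n m h : ℤ) :
    D.S β α n m h =
      resolventForm D.C (D.M n m h) (D.dressedS β n m h) (D.dressedR α n m h) := by
  rw [S, s_dotProduct_inv_DK'_mulVec, mulVec_mulVec, resolventForm_apply, resolventKernel,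
    dressedR]

/-- The site `(n', m', h')` follows `(n, m, h)` in the lattice direction with parameter `d`:
`ξ` advances by `d`, and the plane-wave amplitudes are multiplied by `Φ_d(−κ_i)` and divided by
`Φ_d(κ′_j)`. -/
structure IsStep (d : ℂ) (n m h n' m' h' : ℤ) : Prop where
  notMem : d ∉ D.L.lattice
  xi_eq : D.xi n' m' h' = D.xi n m h + d
  ampρ_eq : ∀ i, D.ampρ i n' m' h' = D.ampρ i n m h * D.L.Phi d (-D.κ i)
  ampν_eq : ∀ j, D.ampν j n m h = D.ampν j n' m' h' * D.L.Phi d (D.κ' j)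

variable {D}

lemma dressedR_apply {α : ℂ} {n m h : ℤ} (hχ : ∀ i, D.L.chi α (D.κ i) (D.xi n m h) ≠ 0)
    (i : Fin N) : D.dressedR α n m h i = (D.L.chi α (D.κ i) (D.xi n m h))⁻¹ * D.r n m h i := by
  rw [dressedR, DK, inv_diagonal_mulVec hχ]

lemma dressedS_apply {β : ℂ} {n m h : ℤ} (hχ : ∀ j, D.L.chi β (D.κ' j) (D.xi n m h) ≠ 0)
    (j : Fin N') : D.dressedS β n m h j = (D.L.chi β (D.κ' j) (D.xi n m h))⁻¹ * D.s n m h j := by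
  rw [dressedS, DK', inv_diagonal_mulVec hχ]

lemma V_eq {n m h : ℤ} (hInv : IsUnit (1 + D.M n m h * D.C).det) (α : ℂ) :
    D.V α n m h = 1 - resolventForm D.C (D.M n m h) (D.s n m h) (D.dressedR α n m h) := by
  rw [V, mulVec_mulVec, resolventForm_apply, resolventKernel_eq_inv_mul hInv, dressedR]

variable {P : ℕ} {extra : Fin P → ℂ}

lemma Generic.xi_add_notMem (hD : D.Generic extra) (n m h : ℤ) (a : Fin N → ℤ) (b : Fin N' → ℤ)
    (e : Fin P → ℤ) :
    D.xi n m h + (∑ i, a i • D.κ i) + (∑ j, b j • D.κ' j) + ∑ t, e t • extra t ∉ D.L.lattice := by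
  simpa [EllLattice.mem_iff, xi] using hD 1 n m h a b e (by simp)

lemma Generic.xi_notMem (hD : D.Generic extra) (n m h : ℤ) : D.xi n m h ∉ D.L.lattice := by
  simpa using hD.xi_add_notMem n m h 0 0 0

lemma Generic.xi_add_extra_notMem (hD : D.Generic extra) (n m h : ℤ) (t : Fin P) :
    D.xi n m h + extra t ∉ D.L.lattice := by
  simpa [Pi.single_apply] using hD.xi_add_notMem n m h 0 0 (Pi.single t 1)

lemma Generic.xi_add_extra_add_κ_notMem (hD : D.Generic extra) (n m h : ℤ) (t : Fin P)
    (i : Fin N) : D.xi n m h + extra t + D.κ i ∉ D.L.lattice := by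
  simpa [Pi.single_apply, add_right_comm] using
    hD.xi_add_notMem n m h (Pi.single i 1) 0 (Pi.single t 1)

lemma Generic.xi_add_extra_add_κ'_notMem (hD : D.Generic extra) (n m h : ℤ) (t : Fin P)
    (j : Fin N') : D.xi n m h + extra t + D.κ' j ∉ D.L.lattice := by
  simpa [Pi.single_apply, add_right_comm] using
    hD.xi_add_notMem n m h 0 (Pi.single j 1) (Pi.single t 1)

lemma Generic.κ_notMem (hD : D.Generic extra) (i : Fin N) : D.κ i ∉ D.L.lattice := by
  simpa [EllLattice.mem_iff, Pi.single_apply] using hD 0 0 0 0 (Pi.single i 1) 0 0 (by simp)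

lemma Generic.κ'_notMem (hD : D.Generic extra) (j : Fin N') : D.κ' j ∉ D.L.lattice := by
  simpa [EllLattice.mem_iff, Pi.single_apply] using hD 0 0 0 0 0 (Pi.single j 1) 0 (by simp)

lemma Generic.κ_add_κ'_notMem (hD : D.Generic extra) (i : Fin N) (j : Fin N') :
    D.κ i + D.κ' j ∉ D.L.lattice := by
  simpa [EllLattice.mem_iff, Pi.single_apply] using
    hD 0 0 0 0 (Pi.single i 1) (Pi.single j 1) 0 (by simp)

lemma Generic.extra_notMem (hD : D.Generic extra) (t : Fin P) : extra t ∉ D.L.lattice := by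
  simpa [EllLattice.mem_iff, Pi.single_apply] using hD 0 0 0 0 0 0 (Pi.single t 1) (by simp)

lemma Generic.extra_add_κ_notMem (hD : D.Generic extra) (t : Fin P) (i : Fin N) :
    extra t + D.κ i ∉ D.L.lattice := by
  simpa [EllLattice.mem_iff, Pi.single_apply, add_comm] using
    hD 0 0 0 0 (Pi.single i 1) 0 (Pi.single t 1) (by simp)

lemma Generic.extra_add_κ'_notMem (hD : D.Generic extra) (t : Fin P) (j : Fin N') :
    extra t + D.κ' j ∉ D.L.lattice := by
  simpa [EllLattice.mem_iff, Pi.single_apply, add_comm] using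
    hD 0 0 0 0 0 (Pi.single j 1) (Pi.single t 1) (by simp)

lemma Generic.shift_add_notMem (hD : D.Generic extra) {n m h : ℤ} (hne : ¬(n = 0 ∧ m = 0 ∧ h = 0))
    (a : Fin N → ℤ) (b : Fin N' → ℤ) :
    D.shift n m h + (∑ i, a i • D.κ i) + ∑ j, b j • D.κ' j ∉ D.L.lattice := by
  simpa [EllLattice.mem_iff, shift] using hD 0 n m h a b 0 (by tauto)

lemma Generic.shift_notMem (hD : D.Generic extra) {n m h : ℤ} (hne : ¬(n = 0 ∧ m = 0 ∧ h = 0)) :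
    D.shift n m h ∉ D.L.lattice := by
  simpa using hD.shift_add_notMem hne 0 0

lemma Generic.Phi_shift_neg_κ_ne_zero (hD : D.Generic extra) {n m h : ℤ}
    (hne : ¬(n = 0 ∧ m = 0 ∧ h = 0)) (i : Fin N) : D.L.Phi (D.shift n m h) (-D.κ i) ≠ 0 := by
  refine EllLattice.Phi_ne_zero (hD.shift_notMem hne)
    (EllLattice.neg_notMem_iff.mpr (hD.κ_notMem i)) ?_
  simpa [Pi.single_apply] using hD.shift_add_notMem hne (Pi.single i (-1)) 0

lemma Generic.Phi_shift_κ'_ne_zero (hD : D.Generic extra) {n m h : ℤ}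
    (hne : ¬(n = 0 ∧ m = 0 ∧ h = 0)) (j : Fin N') : D.L.Phi (D.shift n m h) (D.κ' j) ≠ 0 := by
  refine EllLattice.Phi_ne_zero (hD.shift_notMem hne) (hD.κ'_notMem j) ?_
  simpa [Pi.single_apply] using hD.shift_add_notMem hne 0 (Pi.single j 1)

lemma Generic.isStep_del (hD : D.Generic extra) (n m h : ℤ) :
    D.IsStep D.del n m h (n + 1) m h := by
  have hshift : D.shift 1 0 0 = D.del := by simp [shift]
  have hne : ¬((1 : ℤ) = 0 ∧ (0 : ℤ) = 0 ∧ (0 : ℤ) = 0) := by simp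
  refine ⟨hshift ▸ hD.shift_notMem hne, by simp only [xi, add_smul, one_smul]; ring,
    fun i ↦ ?_, fun j ↦ ?_⟩
  · rw [ampρ, ampρ, zpow_add_one₀ (hshift ▸ hD.Phi_shift_neg_κ_ne_zero hne i)]
    ring
  · rw [ampν, ampν, show -n = -(n + 1) + 1 by ring,
      zpow_add_one₀ (hshift ▸ hD.Phi_shift_κ'_ne_zero hne j)]
    ring

lemma Generic.isStep_eps (hD : D.Generic extra) (n m h : ℤ) :
    D.IsStep D.eps n m h n (m + 1) h := by
  have hshift : D.shift 0 1 0 = D.eps := by simp [shift]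
  have hne : ¬((0 : ℤ) = 0 ∧ (1 : ℤ) = 0 ∧ (0 : ℤ) = 0) := by simp
  refine ⟨hshift ▸ hD.shift_notMem hne, by simp only [xi, add_smul, one_smul]; ring,
    fun i ↦ ?_, fun j ↦ ?_⟩
  · rw [ampρ, ampρ, zpow_add_one₀ (hshift ▸ hD.Phi_shift_neg_κ_ne_zero hne i)]
    ring
  · rw [ampν, ampν, show -m = -(m + 1) + 1 by ring,
      zpow_add_one₀ (hshift ▸ hD.Phi_shift_κ'_ne_zero hne j)]
    ring

lemma Generic.isStep_lam (hD : D.Generic extra) (n m h : ℤ) :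
    D.IsStep D.lam n m h n m (h + 1) := by
  have hshift : D.shift 0 0 1 = D.lam := by simp [shift]
  have hne : ¬((0 : ℤ) = 0 ∧ (0 : ℤ) = 0 ∧ (1 : ℤ) = 0) := by simp
  refine ⟨hshift ▸ hD.shift_notMem hne, by simp only [xi, add_smul, one_smul]; ring,
    fun i ↦ ?_, fun j ↦ ?_⟩
  · rw [ampρ, ampρ, zpow_add_one₀ (hshift ▸ hD.Phi_shift_neg_κ_ne_zero hne i)]
    ring
  · rw [ampν, ampν, show -h = -(h + 1) + 1 by ring,
      zpow_add_one₀ (hshift ▸ hD.Phi_shift_κ'_ne_zero hne j)]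
    ring

lemma IsStep.M_eq_sub_vecMulVec {d : ℂ} {n m h n' m' h' : ℤ} (hstep : D.IsStep d n m h n' m' h')
    (hD : D.Generic extra) :
    D.M n' m' h' = D.M n m h - vecMulVec (D.r n m h) (D.s n' m' h') := by
  ext i j
  have hfay := EllLattice.Phi_neg_mul_Phi_add hstep.notMem (hD.xi_notMem n m h)
    (hstep.xi_eq ▸ hD.xi_notMem n' m' h') (hD.κ_notMem i) (hD.κ'_notMem j)
    (hD.κ_add_κ'_notMem i j)
  rw [← hstep.xi_eq] at hfay
  rw [Matrix.sub_apply, vecMulVec_apply, M_apply, M_apply, r_apply, s_apply, hstep.ampρ_eq,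
    hstep.ampν_eq]
  linear_combination D.ampρ i n m h * D.ampν j n' m' h' * hfay

lemma IsStep.r_add_dressedR {d : ℂ} {n m h n' m' h' : ℤ} (hstep : D.IsStep d n m h n' m' h')
    (hD : D.Generic extra) (t : Fin P)
    (hχ : ∀ i, D.L.chi (extra t) (D.κ i) (D.xi n m h) ≠ 0)
    (hχ' : ∀ i, D.L.chi (extra t) (D.κ i) (D.xi n' m' h') ≠ 0) :
    D.r n m h + D.dressedR (extra t) n' m' h' =
      D.L.chi (extra t) d (D.xi n m h) • D.dressedR (extra t) n m h := by
  ext i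
  have hrel := EllLattice.Phi_add_inv_chi_mul_Phi (δ := d) (hD.extra_notMem t) (hD.κ_notMem i)
    hstep.notMem (hD.extra_add_κ_notMem t i) (hD.xi_notMem n m h)
    (hD.xi_add_extra_notMem n m h t) (hD.xi_add_extra_add_κ_notMem n m h t i)
    (hstep.xi_eq ▸ hD.xi_notMem n' m' h') (hstep.xi_eq ▸ hD.xi_add_extra_notMem n' m' h' t)
    (hstep.xi_eq ▸ hD.xi_add_extra_add_κ_notMem n' m' h' t i) (hχ i) (hstep.xi_eq ▸ hχ' i)
  rw [← hstep.xi_eq] at hrel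
  rw [Pi.add_apply, Pi.smul_apply, smul_eq_mul, dressedR_apply hχ, dressedR_apply hχ', r_apply,
    r_apply, hstep.ampρ_eq]
  linear_combination D.ampρ i n m h * hrel

lemma IsStep.s_eq_dressedS_add {d : ℂ} {n m h n' m' h' : ℤ} (hstep : D.IsStep d n m h n' m' h')
    (hD : D.Generic extra) (t : Fin P)
    (hχ : ∀ j, D.L.chi (extra t) (D.κ' j) (D.xi n m h) ≠ 0)
    (hχ' : ∀ j, D.L.chi (extra t) (D.κ' j) (D.xi n' m' h') ≠ 0) :
    D.s n' m' h' = D.dressedS (extra t) n m h +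
      D.L.chi (extra t) (-d) (D.xi n' m' h') • D.dressedS (extra t) n' m' h' := by
  ext j
  -- The relation for `r`, read along the step backwards.
  have hxi : D.xi n m h = D.xi n' m' h' + -d := by rw [hstep.xi_eq, add_neg_cancel_right]
  have hrel := EllLattice.Phi_add_inv_chi_mul_Phi (δ := -d) (hD.extra_notMem t) (hD.κ'_notMem j)
    (EllLattice.neg_notMem_iff.mpr hstep.notMem) (hD.extra_add_κ'_notMem t j)
    (hD.xi_notMem n' m' h') (hD.xi_add_extra_notMem n' m' h' t)
    (hD.xi_add_extra_add_κ'_notMem n' m' h' t j) (hxi ▸ hD.xi_notMem n m h)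
    (hxi ▸ hD.xi_add_extra_notMem n m h t) (hxi ▸ hD.xi_add_extra_add_κ'_notMem n m h t j)
    (hχ' j) (hxi ▸ hχ j)
  rw [← hxi, EllLattice.Phi_neg_neg] at hrel
  rw [Pi.add_apply, Pi.smul_apply, smul_eq_mul, dressedS_apply hχ, dressedS_apply hχ', s_apply,
    s_apply, hstep.ampν_eq]
  linear_combination D.ampν j n' m' h' * hrel

lemma IsStep.W_mul_V {d : ℂ} {n m h n' m' h' : ℤ} (hstep : D.IsStep d n m h n' m' h')
    (hD : D.Generic extra) (s t : Fin P) (hM : IsUnit (1 + D.M n m h * D.C).det)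
    (hM' : IsUnit (1 + D.M n' m' h' * D.C).det)
    (hχs : ∀ i, D.L.chi (extra s) (D.κ i) (D.xi n m h) ≠ 0)
    (hχs' : ∀ i, D.L.chi (extra s) (D.κ i) (D.xi n' m' h') ≠ 0)
    (hχt : ∀ j, D.L.chi (extra t) (D.κ' j) (D.xi n m h) ≠ 0)
    (hχt' : ∀ j, D.L.chi (extra t) (D.κ' j) (D.xi n' m' h') ≠ 0) :
    D.W (extra t) n m h * D.V (extra s) n' m' h' =
      1 - D.L.chi (extra t) (-d) (D.xi n' m' h') * D.S (extra t) (extra s) n' m' h' -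
        D.L.chi (extra s) d (D.xi n m h) * D.S (extra t) (extra s) n m h := by
  rw [W_eq, V_eq hM', S_eq, S_eq]
  exact one_sub_resolventForm_mul_one_sub_resolventForm hM hM' (hstep.M_eq_sub_vecMulVec hD)
    (hstep.r_add_dressedR hD s hχs hχs') (hstep.s_eq_dressedS_add hD t hχt hχt')

end KPData

/-- `W_β Ṽ_α = 1 − χ_{β,−δ}(ξ+δ) S̃_{β,α} − χ_{α,δ}(ξ) S_{β,α}`, together with the
analogous relations in the other two lattice directions. -/
theorem WV_S_relation {N N' : ℕ} (D : KPData N N') (α β : ℂ)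
    (hρ0 : ∀ i, D.ρ0 i ≠ 0) (hν0 : ∀ j, D.ν0 j ≠ 0)
    (hgen : D.Generic ![α, β])
    (hInv : ∀ n m h : ℤ, IsUnit ((1 + D.M n m h * D.C).det))
    (hχα : ∀ (n m h : ℤ) (i : Fin N), D.L.chi α (D.κ i) (D.xi n m h) ≠ 0)
    (hχβ : ∀ (n m h : ℤ) (j : Fin N'), D.L.chi β (D.κ' j) (D.xi n m h) ≠ 0) :
    ∀ n m h : ℤ,
      (D.W β n m h * D.V α (n + 1) m h =
        1 - D.L.chi β (-D.del) (D.xi (n + 1) m h) * D.S β α (n + 1) m h -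
          D.L.chi α D.del (D.xi n m h) * D.S β α n m h) ∧
      (D.W β n m h * D.V α n (m + 1) h =
        1 - D.L.chi β (-D.eps) (D.xi n (m + 1) h) * D.S β α n (m + 1) h -
          D.L.chi α D.eps (D.xi n m h) * D.S β α n m h) ∧
      (D.W β n m h * D.V α n m (h + 1) =
        1 - D.L.chi β (-D.lam) (D.xi n m (h + 1)) * D.S β α n m (h + 1) -
          D.L.chi α D.lam (D.xi n m h) * D.S β α n m h) := by
  intro n m h
  exact ⟨(hgen.isStep_del n m h).W_mul_V hgen 0 1 (hInv ..) (hInv ..)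
      (hχα _ _ _) (hχα _ _ _) (hχβ _ _ _) (hχβ _ _ _),
    (hgen.isStep_eps n m h).W_mul_V hgen 0 1 (hInv ..) (hInv ..)
      (hχα _ _ _) (hχα _ _ _) (hχβ _ _ _) (hχβ _ _ _),
    (hgen.isStep_lam n m h).W_mul_V hgen 0 1 (hInv ..) (hInv ..)
      (hχα _ _ _) (hχα _ _ _) (hχβ _ _ _) (hχβ _ _ _)⟩
end
end

section
/- (Reduction to the lattice KdV equation.) Let w : ℤ³ → ℂ satisfy the lattice potential KP equation (w(n,m+1,h+1) − w(n+1,m,h+1))·(w(n,m,h+1) − w(n+1,m,h)) = (w(n,m+1,h+1) − w(n+1,m+1,h))·(w(n,m+1,h) − w(n+1,m,h)) for all (n,m,h) ∈ ℤ³, and suppose the dimensional-reduction constraint w(n+1,m,h+1) = w(n,m,h) holds for all (n,m,h) ∈ ℤ³. Then the quantity Q(n,m,h) := (w(n+1,m+1,h) − w(n,m,h))·(w(n,m+1,h) − w(n+1,m,h)) is invariant under the shift n → n+1, i.e. Q(n+1,m,h) = Q(n,m,h) for all (n,m,h) ∈ ℤ³. -/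
/-!
The constraint replaces each value `w(k,·,h+1)` by `w(k-1,·,h)`. The lattice potential KP equation
based at `(n+1,m,h)` thus involves a single value of `h`, and regrouping its terms turns it into
`Q(n+1,m,h) = Q(n,m,h)`. As `n+1` runs over all of `ℤ`, nothing is lost in the reduction.
-/

section Reduction

variable {R : Type*} [CommRing R]

/-- The difference of the two sides of the lattice potential KP equation based at `(n, m, h)`.
The equation is encoded as the vanishing of this difference, so that the effect of the
dimensional reduction can be stated as an identity. -/
def potentialKPDefect (w : ℤ → ℤ → ℤ → R) (n m h : ℤ) : R :=
  (w n (m + 1) (h + 1) - w (n + 1) m (h + 1)) * (w n m (h + 1) - w (n + 1) m h) -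
    (w n (m + 1) (h + 1) - w (n + 1) (m + 1) h) * (w n (m + 1) h - w (n + 1) m h)

/-- The quantity `Q(n, m, h)` whose invariance under `n → n + 1` is the lattice KdV equation. -/
def latticeKdVQuantity (w : ℤ → ℤ → ℤ → R) (n m h : ℤ) : R :=
  (w (n + 1) (m + 1) h - w n m h) * (w n (m + 1) h - w (n + 1) m h)

theorem potentialKPDefect_add_one {w : ℤ → ℤ → ℤ → R}
    (hred : ∀ n m h : ℤ, w (n + 1) m (h + 1) = w n m h) (n m h : ℤ) :
    potentialKPDefect w (n + 1) m h =
      latticeKdVQuantity w (n + 1) m h - latticeKdVQuantity w n m h := by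
  simp only [potentialKPDefect, latticeKdVQuantity, hred]
  ring

theorem lattice_KdV_reduction_general {w : ℤ → ℤ → ℤ → R}
    (hred : ∀ n m h : ℤ, w (n + 1) m (h + 1) = w n m h) :
    (∀ n m h : ℤ, potentialKPDefect w n m h = 0) ↔
      ∀ n m h : ℤ, latticeKdVQuantity w (n + 1) m h = latticeKdVQuantity w n m h := by
  rw [(add_right_surjective (1 : ℤ)).forall]
  simp only [potentialKPDefect_add_one hred, sub_eq_zero]

end Reduction

/-- Reduction to the lattice KdV equation: if `w : ℤ³ → ℂ` satisfies the lattice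
potential KP equation and the dimensional-reduction constraint
`w(n+1,m,h+1) = w(n,m,h)`, then the quantity
`Q(n,m,h) = (w(n+1,m+1,h) − w(n,m,h))·(w(n,m+1,h) − w(n+1,m,h))`
is invariant under the shift `n → n+1`. -/
theorem lattice_KdV_reduction (w : ℤ → ℤ → ℤ → ℂ)
    (hKP : ∀ n m h : ℤ,
      (w n (m + 1) (h + 1) - w (n + 1) m (h + 1)) *
          (w n m (h + 1) - w (n + 1) m h) =
        (w n (m + 1) (h + 1) - w (n + 1) (m + 1) h) *
          (w n (m + 1) h - w (n + 1) m h))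
    (hred : ∀ n m h : ℤ, w (n + 1) m (h + 1) = w n m h) :
    ∀ n m h : ℤ,
      (w (n + 1 + 1) (m + 1) h - w (n + 1) m h) *
          (w (n + 1) (m + 1) h - w (n + 1 + 1) m h) =
        (w (n + 1) (m + 1) h - w n m h) * (w n (m + 1) h - w (n + 1) m h) :=
  (lattice_KdV_reduction_general hred).mp fun n m h => sub_eq_zero.mpr (hKP n m h)
end
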